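/- Let q be a prime power and F a finite field with q elements. For nonzero x, y ∈ F², let v_{x,y} : SL(2,F) → ℂ be the function with v_{x,y}(g) = 1 if g x = y and v_{x,y}(g) = 0 otherwise. If S ⊆ SL(2,F) is an intersecting set of maximum size |S| = q, then the indicator function of S lies in the ℂ-linear span of the vectors {v_{x,y} : x, y ∈ F² \ {0}}. (SL(2,F) has the EKR-module property.) -/

import Mathlib

/-!
Over an integral domain `R`, let `ω` be the area form on `R²`; `SL(2, R)` preserves it. Suppose
that distinct `g`, `k` agree at `x ≠ 0`, that `h` agrees with `g` at `u ≠ 0` and with `k` at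
`w ≠ 0`, and put `d = h x - g x`. Since `h u = g u`, invariance gives `ω (d, h u) = 0`, and
likewise `ω (d, h w) = 0`. If `d ≠ 0`, then `h u ∥ h w`, hence `u ∥ w`, and all three of `g`, `k`,
`h` agree at `u`. As `g ≠ k`, this forces `x ∥ u`, so `h` agrees with `g` at `x` after all.
Therefore an intersecting set lies in `{h | h x = y}` for some `x` and `y`, which makes the maximal
intersecting sets canonical. If `R` is finite, canonical sets have at most `|R|` elements, so
intersecting sets with `|R|` elements are maximal.
-/

open Matrix
open scoped MatrixGroups

section AreaForm

variable {R : Type*} [CommRing R]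

/-- The standard area form on `R²`, i.e. the determinant of the matrix with columns `x` and `u`.
Over a domain, its vanishing expresses that `x` and `u` are parallel. -/
def areaForm (x u : Fin 2 → R) : R := x 0 * u 1 - x 1 * u 0

lemma areaForm_sub_left (x y u : Fin 2 → R) :
    areaForm (x - y) u = areaForm x u - areaForm y u := by
  simp only [areaForm, Pi.sub_apply]
  ring

lemma areaForm_sub_right (x u v : Fin 2 → R) :
    areaForm x (u - v) = areaForm x u - areaForm x v := by
  simp only [areaForm, Pi.sub_apply]
  ring

lemma areaForm_swap (x u : Fin 2 → R) : areaForm u x = -areaForm x u := by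
  simp only [areaForm]
  ring

lemma areaForm_mulVec_mulVec (A : Matrix (Fin 2) (Fin 2) R) (x u : Fin 2 → R) :
    areaForm (A *ᵥ x) (A *ᵥ u) = A.det * areaForm x u := by
  simp only [areaForm, mulVec, dotProduct, Fin.sum_univ_two, det_fin_two]
  ring

lemma areaForm_specialLinearGroup_mulVec (g : SL(2, R)) (x u : Fin 2 → R) :
    areaForm (g.1 *ᵥ x) (g.1 *ᵥ u) = areaForm x u := by
  rw [areaForm_mulVec_mulVec, g.det_coe, one_mul]

lemma areaForm_smul_eq_add (x u w : Fin 2 → R) :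
    areaForm x u • w = areaForm w u • x + areaForm x w • u := by
  ext i
  fin_cases i <;> simp [areaForm] <;> ring

lemma smul_eq_smul_of_areaForm_eq_zero {x u : Fin 2 → R} (h : areaForm x u = 0) (i : Fin 2) :
    x i • u = u i • x := by
  unfold areaForm at h
  ext j
  fin_cases i <;> fin_cases j <;> simp <;> grind

lemma exists_areaForm_ne_zero {x : Fin 2 → R} (hx : x ≠ 0) : ∃ z, areaForm x z ≠ 0 := by
  by_contra! h
  have h₀ : x 0 = 0 := by simpa [areaForm] using h ![0, 1]
  have h₁ : x 1 = 0 := by simpa [areaForm] using h ![1, 0]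
  exact hx (by ext i; fin_cases i <;> assumption)

variable [IsDomain R]

lemma areaForm_eq_zero_trans {x d u : Fin 2 → R} (hd : d ≠ 0) (hx : areaForm d x = 0)
    (hu : areaForm d u = 0) : areaForm x u = 0 := by
  have h : areaForm x u • d = 0 := by
    rw [areaForm_smul_eq_add, hu, areaForm_swap d x, hx, neg_zero, zero_smul, zero_smul, add_zero]
  exact (smul_eq_zero.mp h).resolve_right hd

lemma mulVec_eq_mulVec_of_areaForm_eq_zero {A B : Matrix (Fin 2) (Fin 2) R} {u x : Fin 2 → R}
    (hu : u ≠ 0) (hux : areaForm u x = 0) (h : A *ᵥ u = B *ᵥ u) : A *ᵥ x = B *ᵥ x := by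
  obtain ⟨i, hi⟩ := Function.ne_iff.mp hu
  apply smul_right_injective _ hi
  simp only [← mulVec_smul, smul_eq_smul_of_areaForm_eq_zero hux i]
  simp only [mulVec_smul, h]

lemma eq_of_mulVec_eq_of_areaForm_ne_zero {A B : Matrix (Fin 2) (Fin 2) R} {x u : Fin 2 → R}
    (hxu : areaForm x u ≠ 0) (hx : A *ᵥ x = B *ᵥ x) (hu : A *ᵥ u = B *ᵥ u) : A = B := by
  refine mulVec_injective (funext fun w => smul_right_injective _ hxu ?_)
  simp only [← mulVec_smul, areaForm_smul_eq_add x u w]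
  simp only [mulVec_add, mulVec_smul, hx, hu]

end AreaForm

section Intersecting

variable {R : Type*} [CommRing R]

/-- A set in `SL(2, R)` is intersecting if any two of its elements agree at a nonzero vector. -/
def IsIntersecting (S : Set SL(2, R)) : Prop :=
  ∀ g ∈ S, ∀ h ∈ S, ∃ v : Fin 2 → R, v ≠ 0 ∧ g.1 *ᵥ v = h.1 *ᵥ v

/-- The elements of `SL(2, R)` taking `x` to `y`. For nonzero `x` and `y` these are the canonical
intersecting sets, with characteristic vector `v_{x,y}`. -/
def canonicalSet (x y : Fin 2 → R) : Set SL(2, R) :=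
  {g | g.1 *ᵥ x = y}

lemma isIntersecting_canonicalSet {x : Fin 2 → R} (hx : x ≠ 0) (y : Fin 2 → R) :
    IsIntersecting (canonicalSet x y) :=
  fun _ hg _ hh => ⟨x, hx, hg.trans hh.symm⟩

lemma areaForm_mulVec_of_mem_canonicalSet {x y : Fin 2 → R} {g : SL(2, R)}
    (hg : g ∈ canonicalSet x y) (z : Fin 2 → R) : areaForm y (g.1 *ᵥ z) = areaForm x z := by
  obtain rfl : g.1 *ᵥ x = y := hg
  exact areaForm_specialLinearGroup_mulVec g x z

lemma specialLinearGroup_mulVec_ne_zero {n : Type*} [Fintype n] [DecidableEq n]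
    (g : SpecialLinearGroup n R) {x : n → R} (hx : x ≠ 0) : g.1 *ᵥ x ≠ 0 := by
  have hg : IsUnit g.1 := (isUnit_iff_isUnit_det _).mpr (by simp)
  simpa using (mulVec_injective_of_isUnit hg).ne hx

lemma areaForm_mulVec_sub_mulVec_eq_zero {g h : SL(2, R)} {u : Fin 2 → R}
    (hu : h.1 *ᵥ u = g.1 *ᵥ u) (x : Fin 2 → R) :
    areaForm (h.1 *ᵥ x - g.1 *ᵥ x) (h.1 *ᵥ u) = 0 := by
  rw [areaForm_sub_left, areaForm_specialLinearGroup_mulVec, hu,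
    areaForm_specialLinearGroup_mulVec, sub_self]

variable [IsDomain R]

lemma mulVec_eq_mulVec_of_agree {g k h : SL(2, R)} (hgk : g ≠ k) {x u w : Fin 2 → R}
    (hu : u ≠ 0) (hw : w ≠ 0) (hgkx : g.1 *ᵥ x = k.1 *ᵥ x) (hgu : h.1 *ᵥ u = g.1 *ᵥ u)
    (hkw : h.1 *ᵥ w = k.1 *ᵥ w) : h.1 *ᵥ x = g.1 *ᵥ x := by
  by_contra hne
  have hwu : areaForm w u = 0 := by
    rw [← areaForm_specialLinearGroup_mulVec h]
    refine areaForm_eq_zero_trans (sub_ne_zero.mpr hne) ?_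
      (areaForm_mulVec_sub_mulVec_eq_zero hgu x)
    rw [hgkx]
    exact areaForm_mulVec_sub_mulVec_eq_zero hkw x
  have hku : h.1 *ᵥ u = k.1 *ᵥ u := mulVec_eq_mulVec_of_areaForm_eq_zero hw hwu hkw
  have hux : areaForm u x = 0 := by
    by_contra hux
    exact hgk (Subtype.ext (eq_of_mulVec_eq_of_areaForm_ne_zero hux (hgu.symm.trans hku) hgkx))
  exact hne (mulVec_eq_mulVec_of_areaForm_eq_zero hu hux hgu)

lemma IsIntersecting.exists_subset_canonicalSet {S : Set SL(2, R)} (hS : IsIntersecting S) :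
    ∃ x y : Fin 2 → R, x ≠ 0 ∧ y ≠ 0 ∧ S ⊆ canonicalSet x y := by
  suffices h : ∃ x : Fin 2 → R, x ≠ 0 ∧ ∃ g : SL(2, R), S ⊆ canonicalSet x (g.1 *ᵥ x) by
    obtain ⟨x, hx, g, hSg⟩ := h
    exact ⟨x, g.1 *ᵥ x, hx, specialLinearGroup_mulVec_ne_zero g hx, hSg⟩
  rcases S.subsingleton_or_nontrivial with hsub | ⟨g, hg, k, hk, hgk⟩
  · obtain ⟨x, hx⟩ := exists_ne (0 : Fin 2 → R)
    rcases hsub.eq_empty_or_singleton with rfl | ⟨g, rfl⟩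
    · exact ⟨x, hx, 1, Set.empty_subset _⟩
    · exact ⟨x, hx, g, Set.singleton_subset_iff.mpr rfl⟩
  · obtain ⟨x, hx, hgkx⟩ := hS g hg k hk
    refine ⟨x, hx, g, fun h hh => ?_⟩
    obtain ⟨u, hu, hgu⟩ := hS h hh g hg
    obtain ⟨w, hw, hkw⟩ := hS h hh k hk
    exact mulVec_eq_mulVec_of_agree hgk hu hw hgkx hgu hkw

lemma exists_eq_canonicalSet_of_maximal {S : Set SL(2, R)} (hS : Maximal IsIntersecting S) :
    ∃ x y : Fin 2 → R, x ≠ 0 ∧ y ≠ 0 ∧ S = canonicalSet x y := by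
  obtain ⟨x, y, hx, hy, hsub⟩ := hS.prop.exists_subset_canonicalSet
  exact ⟨x, y, hx, hy, hS.eq_of_subset (isIntersecting_canonicalSet hx y) hsub⟩

lemma exists_injOn_canonicalSet {x y : Fin 2 → R} (hx : x ≠ 0) (hy : y ≠ 0) :
    ∃ (z : Fin 2 → R) (i : Fin 2),
      Set.InjOn (fun g : SL(2, R) => (g.1 *ᵥ z) i) (canonicalSet x y) := by
  obtain ⟨z, hz⟩ := exists_areaForm_ne_zero hx
  obtain ⟨i, hi⟩ := Function.ne_iff.mp hy
  refine ⟨z, i, fun g hg h hh hgh => Subtype.ext ?_⟩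
  have hpar : areaForm y (g.1 *ᵥ z - h.1 *ᵥ z) = 0 := by
    rw [areaForm_sub_right, areaForm_mulVec_of_mem_canonicalSet hg,
      areaForm_mulVec_of_mem_canonicalSet hh, sub_self]
  have hsmul : y i • (g.1 *ᵥ z - h.1 *ᵥ z) = 0 := by
    rw [smul_eq_smul_of_areaForm_eq_zero hpar, Pi.sub_apply, sub_eq_zero.mpr hgh, zero_smul]
  exact eq_of_mulVec_eq_of_areaForm_ne_zero hz (hg.trans hh.symm)
    (sub_eq_zero.mp ((smul_eq_zero.mp hsmul).resolve_left hi))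

lemma ncard_canonicalSet_le [Finite R] {x y : Fin 2 → R} (hx : x ≠ 0) (hy : y ≠ 0) :
    (canonicalSet x y).ncard ≤ Nat.card R := by
  obtain ⟨z, i, hinj⟩ := exists_injOn_canonicalSet hx hy
  rw [← Set.ncard_univ]
  exact Set.ncard_le_ncard_of_injOn _ (fun _ _ => Set.mem_univ _) hinj

lemma IsIntersecting.maximal_of_card_le_ncard [Finite R] {S : Set SL(2, R)}
    (hS : IsIntersecting S) (hcard : Nat.card R ≤ S.ncard) : Maximal IsIntersecting S := by
  refine ⟨hS, fun T hT hST => ?_⟩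
  obtain ⟨x, y, hx, hy, hTC⟩ := hT.exists_subset_canonicalSet
  have hSC : S = canonicalSet x y :=
    Set.eq_of_subset_of_ncard_le (hST.trans hTC) ((ncard_canonicalSet_le hx hy).trans hcard)
  exact hTC.trans hSC.ge

theorem sl2_ekr_module_general {K : Type*} [Semiring K] {S : Set SL(2, R)}
    (hS : Maximal IsIntersecting S) :
    S.indicator (fun _ => (1 : K)) ∈ Submodule.span K {f : SL(2, R) → K |
      ∃ x y : Fin 2 → R, x ≠ 0 ∧ y ≠ 0 ∧ f = (canonicalSet x y).indicator (fun _ => (1 : K))} := by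
  obtain ⟨x, y, hx, hy, rfl⟩ := exists_eq_canonicalSet_of_maximal hS
  exact Submodule.subset_span ⟨x, y, hx, hy, rfl⟩

end Intersecting

/-- **EKR-module property for SL(2,q).**  The indicator function of any maximum
intersecting set in `SL(2,F)` (of size `q`) lies in the complex span of the
characteristic vectors of the canonical intersecting sets. -/
theorem sl2_ekr_module (q : ℕ) (hq : IsPrimePow q) (F : Type*) [Field F] [Fintype F]
    (hF : Fintype.card F = q) (S : Set (Matrix.SpecialLinearGroup (Fin 2) F))
    (hS : ∀ g ∈ S, ∀ h ∈ S, ∃ v : Fin 2 → F, v ≠ 0 ∧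
      (g : Matrix (Fin 2) (Fin 2) F).mulVec v = (h : Matrix (Fin 2) (Fin 2) F).mulVec v)
    (hcard : S.ncard = q) :
    Set.indicator S (fun _ => (1 : ℂ)) ∈
      Submodule.span ℂ {f : Matrix.SpecialLinearGroup (Fin 2) F → ℂ |
        ∃ x y : Fin 2 → F, x ≠ 0 ∧ y ≠ 0 ∧
          f = Set.indicator {g : Matrix.SpecialLinearGroup (Fin 2) F |
                (g : Matrix (Fin 2) (Fin 2) F).mulVec x = y} (fun _ => (1 : ℂ))} :=
  sl2_ekr_module_general <|
    IsIntersecting.maximal_of_card_le_ncard hS (by rw [Nat.card_eq_fintype_card, hF, hcard])
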